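/- There is a universal constant C > 0 such that the following holds. Let u_1, ..., u_m be column vectors in ℂ^d such that B = Σ_{i=1}^m u_i u_i* satisfies B ≤ I (i.e., I − B is positive semidefinite) and ‖u_i‖² ≤ ε for all i, and let t ∈ [0,1]. Then there exists a set of indices S ⊆ {1, ..., m} such that ‖Σ_{i ∈ S} u_i u_i* − t B‖ ≤ C ε^{1/4}. -/

import Mathlib

open ComplexOrder

/-- The outer product `u u*` of a vector `u ∈ ℂ^d` with itself, as a `d × d` matrix. -/
noncomputable def outer {d : ℕ} (u : EuclideanSpace ℂ (Fin d)) :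
    Matrix (Fin d) (Fin d) ℂ :=
  Matrix.of fun i j => u i * starRingEnd ℂ (u j)

/-- The operator norm of a matrix, acting on Euclidean space. -/
noncomputable def opNorm {d : ℕ} (A : Matrix (Fin d) (Fin d) ℂ) : ℝ :=
  ‖Matrix.toEuclideanCLM (𝕜 := ℂ) A‖

/-! Put `P = 2√ε • 1` and `p(x) = det (P + ∑ᵢ xᵢ uᵢuᵢ*)`, a multiaffine real stable polynomial. On
`p(x) p(y)`, the operator `∏ᵢ (1 - ∂/∂xᵢ - ∂/∂yᵢ)` is a product of averages: its `i`-th factor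
lowers `xᵢ` by `1/t` with probability `t` and `yᵢ` by `1/(1-t)` with probability `1-t`. The
logarithmic derivatives of `p` at `0` are at most `√ε/2`, so by the barrier argument of Marcus,
Spielman and Srivastava the operator leaves the diagonal point `δ = 1/(1-√ε)` above the roots. When
the factors are undone one at a time, this property survives for at least one of the two shifts,
which selects a set `S` with `∑_{i ∈ S} uᵢuᵢ* ≤ t (P + δB)` and
`∑_{i ∉ S} uᵢuᵢ* ≤ (1-t) (P + δB)`. Since `B ≤ 1`, these bounds place `∑_{i ∈ S} uᵢuᵢ* - tB`
between `-r` and `r` for `r = 2√ε + δ - 1`, and `r ≤ 4√ε` once `4√ε ≤ 1`. -/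

/-- The partial derivative of a multiaffine function in the coordinate `j`, encoded as a unit
forward difference so that no calculus is needed. -/
def coordDiff {R ι : Type*} [CommRing R] [DecidableEq ι] (j : ι) (f : (ι → R) → R) :
    (ι → R) → R :=
  fwdDiff (Pi.single j 1) f

local notation "∂[" j "]" => coordDiff j

section Multiaffine

variable {R ι : Type*} [CommRing R] [DecidableEq ι]

/-- A function is multiaffine if it is affine in each coordinate separately. -/
def IsMultiaffine (f : (ι → R) → R) : Prop :=
  ∀ x j c, f (x + Pi.single j c) = f x + c * ∂[j] f x

/-- The operator `1 - ∂_z - ∂_w`. For multiaffine `f` and every `t ≠ 0, 1` it is the average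
`t f(x - e_z / t) + (1 - t) f(x - e_w / (1 - t))` of two shifts of `f`: the mean over a random
choice of `z` with probability `t` and `w` with probability `1 - t`. -/
def meanShift (z w : ι) (f : (ι → R) → R) : (ι → R) → R :=
  f - ∂[z] f - ∂[w] f

/-- The Wronskian `(D f) g - f (D g)`, where `D = ∂_z + ∂_w`. -/
def pairWronskian (z w : ι) (f g : (ι → R) → R) : (ι → R) → R :=
  (∂[z] f + ∂[w] f) * g - f * (∂[z] g + ∂[w] g)

lemma coordDiff_comm (i j : ι) (f : (ι → R) → R) : ∂[i] (∂[j] f) = ∂[j] (∂[i] f) := by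
  funext x
  simp only [coordDiff, fwdDiff, add_right_comm x (Pi.single i 1)]
  ring

lemma coordDiff_zero (j : ι) : ∂[j] (0 : (ι → R) → R) = 0 :=
  fwdDiff_const _ 0

lemma coordDiff_meanShift (z w j : ι) (f : (ι → R) → R) :
    ∂[j] (meanShift z w f) = meanShift z w (∂[j] f) := by
  simp only [meanShift, coordDiff_comm z j, coordDiff_comm w j]
  funext x
  simp only [coordDiff, fwdDiff, Pi.sub_apply]
  ring

lemma mul_coordDiff_meanShift (z w j : ι) (f : (ι → R) → R) (x : ι → R) :
    f x * ∂[j] (meanShift z w f) x =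
      ∂[j] f x * meanShift z w f x + pairWronskian z w f (∂[j] f) x := by
  rw [coordDiff_meanShift]
  simp only [meanShift, pairWronskian, Pi.sub_apply, Pi.add_apply, Pi.mul_apply]
  ring

namespace IsMultiaffine

variable {f g : (ι → R) → R}

protected lemma coordDiff (hf : IsMultiaffine f) (j : ι) : IsMultiaffine (∂[j] f) := fun x i c ↦ by
  have hbase := hf x i c
  have hshift := hf (x + Pi.single j 1) i c
  simp only [coordDiff, fwdDiff, add_right_comm x (Pi.single i _)] at hbase hshift ⊢
  linear_combination hshift - hbase

lemma coordDiff_self (hf : IsMultiaffine f) (j : ι) : ∂[j] (∂[j] f) = 0 := by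
  funext x
  have hdouble := hf x j (1 + 1)
  simp only [coordDiff, fwdDiff, Pi.single_add, ← add_assoc, Pi.zero_apply] at *
  linear_combination hdouble

protected lemma meanShift (hf : IsMultiaffine f) (z w : ι) : IsMultiaffine (meanShift z w f) :=
  fun x j c ↦ by
    rw [coordDiff_meanShift]
    simp only [meanShift, Pi.sub_apply, hf x j c, hf.coordDiff z x j c, hf.coordDiff w x j c,
      coordDiff_comm j]
    ring

lemma apply_add_single_add_single (hf : IsMultiaffine f) (x : ι → R) (z w : ι) (s : R) :
    f (x + Pi.single z s + Pi.single w s) =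
      f x + (∂[z] f x + ∂[w] f x) * s + ∂[w] (∂[z] f) x * s ^ 2 := by
  rw [hf, hf, hf.coordDiff w, coordDiff_comm z]
  ring

lemma coordDiff_add_coordDiff_apply_add_single_add_single (hf : IsMultiaffine f) (x : ι → R)
    (z w : ι) (s : R) :
    ∂[z] f (x + Pi.single z s + Pi.single w s) + ∂[w] f (x + Pi.single z s + Pi.single w s) =
      ∂[z] f x + ∂[w] f x + 2 * ∂[w] (∂[z] f) x * s := by
  have hcomm := coordDiff_comm z w f
  simp only [(hf.coordDiff _).apply_add_single_add_single, coordDiff_self (hf.coordDiff _),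
    hcomm, hf.coordDiff_self, coordDiff_zero, Pi.zero_apply]
  rw [← hcomm]
  ring

lemma pairWronskian_apply_add_single_add_single (hf : IsMultiaffine f) (hg : IsMultiaffine g)
    (x : ι → R) (z w : ι) (s : R) :
    pairWronskian z w f g (x + Pi.single z s + Pi.single w s) =
      pairWronskian z w f g x + 2 * (∂[w] (∂[z] f) x * g x - f x * ∂[w] (∂[z] g) x) * s +
        (∂[w] (∂[z] f) x * (∂[z] g x + ∂[w] g x) -
          (∂[z] f x + ∂[w] f x) * ∂[w] (∂[z] g) x) * s ^ 2 := by
  simp only [pairWronskian, Pi.sub_apply, Pi.add_apply, Pi.mul_apply,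
    hf.coordDiff_add_coordDiff_apply_add_single_add_single, hf.apply_add_single_add_single,
    hg.coordDiff_add_coordDiff_apply_add_single_add_single, hg.apply_add_single_add_single]
  ring

end IsMultiaffine

end Multiaffine

section StronglyRayleigh

variable {ι : Type*}

/-- The point `a` lies above the roots of `f`, in the terminology of Marcus, Spielman and
Srivastava. -/
def AboveRoots (f : (ι → ℝ) → ℝ) (a : ι → ℝ) : Prop :=
  ∀ x, a ≤ x → 0 < f x

lemma AboveRoots.mono {f : (ι → ℝ) → ℝ} {a b : ι → ℝ} (h : AboveRoots f a) (hab : a ≤ b) :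
    AboveRoots f b :=
  fun x hx ↦ h x (hab.trans hx)

variable [DecidableEq ι]

/-- Brändén's strongly Rayleigh condition for a real multiaffine function, which expresses real
stability without reference to complex arguments. -/
structure IsStronglyRayleigh (f : (ι → ℝ) → ℝ) : Prop where
  isMultiaffine : IsMultiaffine f
  mul_coordDiff_coordDiff_le : ∀ x i j, f x * ∂[i] (∂[j] f) x ≤ ∂[i] f x * ∂[j] f x

lemma le_add_single (x : ι → ℝ) (k : ι) {c : ℝ} (hc : 0 ≤ c) : x ≤ x + Pi.single k c :=
  le_add_of_nonneg_right (Pi.single_nonneg.2 hc)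

lemma le_induction_add_single [Finite ι] {P : (ι → ℝ) → Prop} {x y : ι → ℝ} (hxy : x ≤ y)
    (base : P x) (step : ∀ x', x ≤ x' → ∀ k c, 0 ≤ c → P x' → P (x' + Pi.single k c)) : P y := by
  cases nonempty_fintype ι
  have partial_sum (s : Finset ι) :
      x ≤ x + ∑ k ∈ s, Pi.single k (y k - x k) ∧ P (x + ∑ k ∈ s, Pi.single k (y k - x k)) := by
    induction s using Finset.induction_on with
    | empty => simpa using base
    | insert k s hk ih =>
      have hc : 0 ≤ y k - x k := sub_nonneg.2 (hxy k)
      rw [Finset.sum_insert hk, add_comm (Pi.single k _), ← add_assoc]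
      exact ⟨ih.1.trans (le_add_single _ k hc), step _ ih.1 k _ hc ih.2⟩
  have hsum : ∑ k, Pi.single k (y k - x k) = y - x := Finset.univ_sum_single (y - x)
  simpa [hsum] using (partial_sum Finset.univ).2

lemma IsMultiaffine.coordDiff_nonneg {f : (ι → ℝ) → ℝ} (hf : IsMultiaffine f) {a : ι → ℝ}
    (h : ∀ x, a ≤ x → 0 ≤ f x) (j : ι) {x : ι → ℝ} (hx : a ≤ x) : 0 ≤ ∂[j] f x := by
  by_contra! hneg
  set c := (f x + 1) / -∂[j] f x with hc
  have hc0 : 0 ≤ c := div_nonneg (by linarith [h x hx]) (by linarith)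
  have hval : f (x + Pi.single j c) = -1 := by
    rw [hf, hc]
    field_simp [hneg.ne]
    ring
  linarith [h _ (hx.trans (le_add_single x j hc0))]

namespace IsStronglyRayleigh

variable [Finite ι] {f : (ι → ℝ) → ℝ}

lemma coordDiff_div_le (hf : IsStronglyRayleigh f) {a y : ι → ℝ} (ha : AboveRoots f a)
    (hay : a ≤ y) (j : ι) : ∂[j] f y / f y ≤ ∂[j] f a / f a := by
  refine le_induction_add_single (P := fun y ↦ ∂[j] f y / f y ≤ ∂[j] f a / f a) hay le_rfl
    fun x hx k c hc ih ↦ le_trans ?_ ih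
  rw [div_le_div_iff₀ (ha _ (hx.trans (le_add_single x k hc))) (ha x hx), hf.isMultiaffine,
    hf.isMultiaffine.coordDiff]
  linarith [mul_le_mul_of_nonneg_left (hf.mul_coordDiff_coordDiff_le x k j) hc]

lemma coordDiff_le_mul (hf : IsStronglyRayleigh f) {a y : ι → ℝ} (ha : AboveRoots f a)
    (hay : a ≤ y) {j : ι} {r : ℝ} (h : ∂[j] f a ≤ r * f a) : ∂[j] f y ≤ r * f y :=
  (div_le_iff₀ (ha y hay)).1 <|
    (hf.coordDiff_div_le ha hay j).trans ((div_le_iff₀ (ha a le_rfl)).2 h)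

lemma aboveRoots_of_aboveRoots_meanShift (hf : IsStronglyRayleigh f) {a c : ι → ℝ} {z w : ι}
    (h : AboveRoots (meanShift z w f) a) (hc : AboveRoots f c) : AboveRoots f a := by
  intro y hay
  by_contra! hy
  refine (hc (y ⊔ c) le_sup_right).not_ge <| le_induction_add_single (P := fun x ↦ f x ≤ 0)
    le_sup_left hy fun x hyx k r hr hx ↦ ?_
  by_contra! hpos
  rw [hf.isMultiaffine] at hpos
  have hk : 0 < ∂[k] f x := pos_of_mul_pos_right (by linarith) hr
  set b := x + Pi.single k (-f x / ∂[k] f x) with hb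
  have hfb : f b = 0 := by
    rw [hb, hf.isMultiaffine]
    field_simp
    ring
  have hab : a ≤ b :=
    (hay.trans hyx).trans (le_add_single x k (div_nonneg (by linarith) hk.le))
  have hkb : 0 < ∂[k] f b := by
    rwa [hb, hf.isMultiaffine.coordDiff, hf.isMultiaffine.coordDiff_self, Pi.zero_apply,
      mul_zero, add_zero]
  have hnonneg (j : ι) : 0 ≤ ∂[j] f b := by
    have hR := hf.mul_coordDiff_coordDiff_le b k j
    rw [hfb, zero_mul] at hR
    exact nonneg_of_mul_nonneg_right hR hkb
  have hT := h b hab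
  simp only [meanShift, Pi.sub_apply, hfb] at hT
  linarith [hnonneg z, hnonneg w]

lemma aboveRoots_sub_single (hf : IsStronglyRayleigh f) {a : ι → ℝ} (ha : AboveRoots f a) {j : ι}
    {r : ℝ} (hr : 0 < r) (h : r * ∂[j] f a < f a) : AboveRoots f (a - Pi.single j r) := by
  intro y hy
  have hay : a ≤ y + Pi.single j r := sub_le_iff_le_add.1 hy
  have hfy : f y = f (y + Pi.single j r) - r * ∂[j] f (y + Pi.single j r) := by
    rw [hf.isMultiaffine.coordDiff, hf.isMultiaffine.coordDiff_self, hf.isMultiaffine,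
      Pi.zero_apply]
    ring
  have hratio : ∂[j] f (y + Pi.single j r) / f (y + Pi.single j r) < 1 / r :=
    (hf.coordDiff_div_le ha hay j).trans_lt <| by
      rwa [div_lt_div_iff₀ (ha a le_rfl) hr, one_mul, mul_comm]
  rw [div_lt_div_iff₀ (ha _ hay) hr] at hratio
  linarith

lemma aboveRoots_sub_single_or (hf : IsStronglyRayleigh f) {a c : ι → ℝ} {z w : ι}
    (h : AboveRoots (meanShift z w f) a) (hc : AboveRoots f c) {t : ℝ} (ht0 : 0 < t)
    (ht1 : t < 1) :
    AboveRoots f (a - Pi.single z (1 / t)) ∨ AboveRoots f (a - Pi.single w (1 / (1 - t))) := by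
  have ha := hf.aboveRoots_of_aboveRoots_meanShift h hc
  have ht1' : 0 < 1 - t := sub_pos.2 ht1
  by_contra! hcon
  have hz : t * f a ≤ ∂[z] f a := by
    by_contra! hlt
    exact hcon.1 (hf.aboveRoots_sub_single ha (by positivity)
      (by rwa [one_div_mul_eq_div, div_lt_iff₀' ht0]))
  have hw : (1 - t) * f a ≤ ∂[w] f a := by
    by_contra! hlt
    exact hcon.2 (hf.aboveRoots_sub_single ha (by positivity)
      (by rwa [one_div_mul_eq_div, div_lt_iff₀' ht1']))
  have hT := h a le_rfl
  simp only [meanShift, Pi.sub_apply] at hT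
  linarith

end IsStronglyRayleigh

-- On the line `b + s (e_z + e_w)` a multiaffine `f` is `A + p s + E s ^ 2` and `∂[j] f` is
-- `A' + q s + E' s ^ 2`. Their Wronskian is a nonnegative quadratic in `s`, and the sign of its
-- discriminant is what yields the key inequality `A * Y ≤ p * X`.
lemma mul_quadratic_wronskian_le {A p E A' q E' δ : ℝ} (hA : 0 < A) (hp : 0 ≤ p) (hE : 0 ≤ E)
    (hδ : 0 ≤ δ)
    (hW : ∀ s, 0 ≤ p * A' - A * q + 2 * (E * A' - A * E') * s + (E * q - p * E') * s ^ 2) :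
    A * δ * ((p * A' - A * q) + 2 * (E * A' - A * E') * δ + (E * q - p * E') * δ ^ 2) ≤
      (A' * (A + p * δ + E * δ ^ 2) - A * (A' + q * δ + E' * δ ^ 2)) *
        (A + p * δ + E * δ ^ 2) := by
  set X := p * A' - A * q with hX
  set Y := E * A' - A * E' with hY
  set Z := E * q - p * E' with hZ
  have hX0 : 0 ≤ X := by simpa using hW 0
  have hAZ : A * Z = p * Y - E * X := by rw [hX, hY, hZ]; ring
  have hdiscrim : Y ^ 2 ≤ X * Z := by
    have := discrim_le_zero fun s ↦ (hW s).trans_eq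
      (show _ = Z * (s * s) + (2 * Y) * s + X by ring)
    rw [discrim] at this
    linarith
  have hAYY : A * Y ^ 2 ≤ X * (p * Y - E * X) := by
    rw [← hAZ, mul_left_comm]
    exact mul_le_mul_of_nonneg_left hdiscrim hA.le
  have hEXX : 0 ≤ E * X * X := by positivity
  have hpX : 0 ≤ p * X := by positivity
  have hY0 : 0 ≤ Y := by
    by_contra! hneg
    nlinarith [mul_pos hA (pow_pos (neg_pos.2 hneg) 2), mul_nonneg hpX (neg_pos.2 hneg).le]
  have hAY : A * Y ≤ p * X := by
    rcases hY0.eq_or_lt with h0 | hpos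
    · rwa [← h0, mul_zero]
    · exact le_of_mul_le_mul_right (by linarith) hpos
  have hgap : (A' * (A + p * δ + E * δ ^ 2) - A * (A' + q * δ + E' * δ ^ 2)) *
        (A + p * δ + E * δ ^ 2) - A * δ * (X + 2 * Y * δ + Z * δ ^ 2) =
      δ ^ 2 * (p * X - A * Y) + 2 * (E * X * δ ^ 3) + E * Y * δ ^ 4 := by
    rw [hX, hY, hZ]
    ring
  have hrest : 0 ≤ 2 * (E * X * δ ^ 3) + E * Y * δ ^ 4 := by positivity
  linarith only [hgap, hrest, mul_nonneg (sq_nonneg δ) (sub_nonneg.2 hAY)]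

namespace IsStronglyRayleigh

variable {f : (ι → ℝ) → ℝ} {b : ι → ℝ} {z w : ι} {δ φ : ℝ}

lemma pairWronskian_coordDiff_nonneg (hf : IsStronglyRayleigh f) (x : ι → ℝ) (z w j : ι) :
    0 ≤ pairWronskian z w f (∂[j] f) x := by
  simp only [pairWronskian, Pi.sub_apply, Pi.add_apply, Pi.mul_apply]
  linarith [hf.mul_coordDiff_coordDiff_le x z j, hf.mul_coordDiff_coordDiff_le x w j]

lemma mul_pairWronskian_coordDiff_le (hf : IsStronglyRayleigh f) (hb : AboveRoots f b)
    (z w j : ι) (hδ : 0 ≤ δ) :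
    f b * δ * pairWronskian z w f (∂[j] f) (b + Pi.single z δ + Pi.single w δ) ≤
      (∂[j] f b * f (b + Pi.single z δ + Pi.single w δ) -
          f b * ∂[j] f (b + Pi.single z δ + Pi.single w δ)) *
        f (b + Pi.single z δ + Pi.single w δ) := by
  have hf' := hf.isMultiaffine
  have hdiff_nonneg (k : ι) {x : ι → ℝ} (hx : b ≤ x) : 0 ≤ ∂[k] f x :=
    hf'.coordDiff_nonneg (fun x hx ↦ (hb x hx).le) k hx
  have hline (s : ℝ) := (hf.pairWronskian_coordDiff_nonneg _ z w j).trans_eq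
    (hf'.pairWronskian_apply_add_single_add_single (hf'.coordDiff j) b z w s)
  rw [hf'.pairWronskian_apply_add_single_add_single (hf'.coordDiff j),
    hf'.apply_add_single_add_single, (hf'.coordDiff j).apply_add_single_add_single]
  exact mul_quadratic_wronskian_le (hb b le_rfl)
    (add_nonneg (hdiff_nonneg z le_rfl) (hdiff_nonneg w le_rfl))
    ((hf'.coordDiff z).coordDiff_nonneg (fun _ ↦ hdiff_nonneg z) w le_rfl) hδ hline

variable [Finite ι]

lemma le_mul_meanShift (hf : IsStronglyRayleigh f) (hb : AboveRoots f b)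
    (hz : ∂[z] f b ≤ φ * f b) (hw : ∂[w] f b ≤ φ * f b) (hδ : 0 ≤ δ) (hδφ : 1 ≤ δ * (1 - 2 * φ))
    {y : ι → ℝ} (hy : b ≤ y) : f y ≤ δ * meanShift z w f y := by
  have hgap : (1 - 2 * φ) * f y ≤ meanShift z w f y := by
    simp only [meanShift, Pi.sub_apply]
    linarith [hf.coordDiff_le_mul hb hy hz, hf.coordDiff_le_mul hb hy hw]
  calc f y ≤ δ * (1 - 2 * φ) * f y := le_mul_of_one_le_left (hb y hy).le hδφ
    _ = δ * ((1 - 2 * φ) * f y) := mul_assoc ..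
    _ ≤ δ * meanShift z w f y := mul_le_mul_of_nonneg_left hgap hδ

lemma aboveRoots_meanShift (hf : IsStronglyRayleigh f) (hb : AboveRoots f b)
    (hz : ∂[z] f b ≤ φ * f b) (hw : ∂[w] f b ≤ φ * f b) (hδ : 0 ≤ δ)
    (hδφ : 1 ≤ δ * (1 - 2 * φ)) : AboveRoots (meanShift z w f) b := fun y hy ↦
  pos_of_mul_pos_right ((hb y hy).trans_le (hf.le_mul_meanShift hb hz hw hδ hδφ hy)) hδ

lemma coordDiff_meanShift_le (hf : IsStronglyRayleigh f) (hb : AboveRoots f b)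
    (hz : ∂[z] f b ≤ φ * f b) (hw : ∂[w] f b ≤ φ * f b) (hδ : 0 ≤ δ)
    (hδφ : 1 ≤ δ * (1 - 2 * φ)) {j : ι} (hj : ∂[j] f b ≤ φ * f b) :
    ∂[j] (meanShift z w f) (b + Pi.single z δ + Pi.single w δ) ≤
      φ * meanShift z w f (b + Pi.single z δ + Pi.single w δ) := by
  have hW := hf.mul_pairWronskian_coordDiff_le hb z w j hδ
  set y := b + Pi.single z δ + Pi.single w δ
  set W := pairWronskian z w f (∂[j] f) y
  have hby : b ≤ y := (le_add_single b z hδ).trans (le_add_single _ w hδ)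
  have hA : 0 < f b := hb b le_rfl
  have hP : 0 < f y := hb y hby
  have hT : 0 < meanShift z w f y := hf.aboveRoots_meanShift hb hz hw hδ hδφ y hby
  have hPT : f y ≤ δ * meanShift z w f y := hf.le_mul_meanShift hb hz hw hδ hδφ hby
  have hW0 : 0 ≤ W := hf.pairWronskian_coordDiff_nonneg y z w j
  have hratio : f b * ∂[j] (meanShift z w f) y ≤ ∂[j] f b * meanShift z w f y := by
    refine le_of_mul_le_mul_left ?_ (pow_pos hP 2)
    calc f y ^ 2 * (f b * ∂[j] (meanShift z w f) y)
        = f y * (f b * ∂[j] f y * meanShift z w f y) + f y * (f b * W) := by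
          linear_combination f y * f b * mul_coordDiff_meanShift z w j f y
      _ ≤ f y * (f b * ∂[j] f y * meanShift z w f y) + δ * meanShift z w f y * (f b * W) := by
          gcongr
      _ ≤ f y * (f b * ∂[j] f y * meanShift z w f y) +
            meanShift z w f y * ((∂[j] f b * f y - f b * ∂[j] f y) * f y) := by
          linarith [mul_le_mul_of_nonneg_left hW hT.le]
      _ = f y ^ 2 * (∂[j] f b * meanShift z w f y) := by ring
  refine le_of_mul_le_mul_left (hratio.trans ?_) hA
  linarith [mul_le_mul_of_nonneg_right hj hT.le]

end IsStronglyRayleigh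

end StronglyRayleigh

section Tensor

variable {R ι κ : Type*} [CommRing R]

/-- The product of two functions in disjoint sets of variables. -/
def tensor (f : (ι → R) → R) (g : (κ → R) → R) : (ι ⊕ κ → R) → R :=
  fun x ↦ f (x ∘ Sum.inl) * g (x ∘ Sum.inr)

lemma tensor_elim (f : (ι → R) → R) (g : (κ → R) → R) (a : ι → R) (b : κ → R) :
    tensor f g (Sum.elim a b) = f a * g b :=
  rfl

section AboveRoots

variable {f : (ι → ℝ) → ℝ} {g : (κ → ℝ) → ℝ}

lemma AboveRoots.of_tensor_left {a : ι → ℝ} {b c : κ → ℝ}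
    (h : AboveRoots (tensor f g) (Sum.elim a b)) (hc : AboveRoots g c) : AboveRoots f a := by
  intro x hx
  have hpos := h (Sum.elim x (b ⊔ c)) (Sum.elim_le_elim_iff.2 ⟨hx, le_sup_left⟩)
  exact pos_of_mul_pos_left hpos (hc _ le_sup_right).le

lemma AboveRoots.of_tensor_right {a c : ι → ℝ} {b : κ → ℝ}
    (h : AboveRoots (tensor f g) (Sum.elim a b)) (hc : AboveRoots f c) : AboveRoots g b := by
  intro x hx
  have hpos := h (Sum.elim (a ⊔ c) x) (Sum.elim_le_elim_iff.2 ⟨le_sup_left, hx⟩)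
  exact pos_of_mul_pos_right hpos (hc _ le_sup_right).le

protected lemma AboveRoots.tensor {a : ι → ℝ} {b : κ → ℝ} (hf : AboveRoots f a)
    (hg : AboveRoots g b) : AboveRoots (tensor f g) (Sum.elim a b) := fun _ hx ↦
  mul_pos (hf _ fun i ↦ hx (Sum.inl i)) (hg _ fun k ↦ hx (Sum.inr k))

end AboveRoots

variable [DecidableEq ι] [DecidableEq κ]

lemma add_single_inl_comp_inl (x : ι ⊕ κ → R) (i : ι) (c : R) :
    (x + Pi.single (Sum.inl i) c) ∘ Sum.inl = x ∘ Sum.inl + Pi.single i c := by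
  rw [← Sum.elim_single_zero]
  rfl

lemma add_single_inl_comp_inr (x : ι ⊕ κ → R) (i : ι) (c : R) :
    (x + Pi.single (Sum.inl i) c) ∘ Sum.inr = x ∘ Sum.inr := by
  rw [← Sum.elim_single_zero]
  ext
  simp

lemma add_single_inr_comp_inl (x : ι ⊕ κ → R) (k : κ) (c : R) :
    (x + Pi.single (Sum.inr k) c) ∘ Sum.inl = x ∘ Sum.inl := by
  rw [← Sum.elim_zero_single]
  ext
  simp

lemma add_single_inr_comp_inr (x : ι ⊕ κ → R) (k : κ) (c : R) :
    (x + Pi.single (Sum.inr k) c) ∘ Sum.inr = x ∘ Sum.inr + Pi.single k c := by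
  rw [← Sum.elim_zero_single]
  rfl

lemma coordDiff_inl_tensor (i : ι) (f : (ι → R) → R) (g : (κ → R) → R) :
    ∂[Sum.inl i] (tensor f g) = tensor (∂[i] f) g := by
  funext x
  simp only [coordDiff, fwdDiff, tensor, add_single_inl_comp_inl, add_single_inl_comp_inr, sub_mul]

lemma coordDiff_inr_tensor (k : κ) (f : (ι → R) → R) (g : (κ → R) → R) :
    ∂[Sum.inr k] (tensor f g) = tensor f (∂[k] g) := by
  funext x
  simp only [coordDiff, fwdDiff, tensor, add_single_inr_comp_inl, add_single_inr_comp_inr, mul_sub]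

protected lemma IsMultiaffine.tensor {f : (ι → R) → R} {g : (κ → R) → R} (hf : IsMultiaffine f)
    (hg : IsMultiaffine g) : IsMultiaffine (tensor f g) := by
  rintro x (i | k) c
  · rw [coordDiff_inl_tensor]
    simp only [tensor, add_single_inl_comp_inl, add_single_inl_comp_inr, hf _ i c]
    ring
  · rw [coordDiff_inr_tensor]
    simp only [tensor, add_single_inr_comp_inl, add_single_inr_comp_inr, hg _ k c]
    ring

end Tensor

section RealStable

variable {ι κ : Type*} [DecidableEq ι] [DecidableEq κ]

/-- `F` witnesses the real stability of `f`: it extends `f` to complex arguments and has no zero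
whose coordinates all lie in the open upper half-plane. Continuity of `F` is recorded as a field
so that polynomials never have to be mentioned. -/
structure IsStableExtension (F : (ι → ℂ) → ℂ) (f : (ι → ℝ) → ℝ) : Prop where
  isMultiaffine : IsMultiaffine F
  continuous : Continuous F
  apply_ofReal : ∀ x : ι → ℝ, F (fun i ↦ (x i : ℂ)) = f x
  ne_zero : ∀ z, (∀ i, 0 < (z i).im) → F z ≠ 0

lemma ofReal_add_single (x : ι → ℝ) (j : ι) (c : ℝ) :
    (fun i ↦ ((x + Pi.single j c : ι → ℝ) i : ℂ)) = (fun i ↦ (x i : ℂ)) + Pi.single j (c : ℂ) := by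
  ext i
  rw [Pi.add_apply, Pi.add_apply, Complex.ofReal_add,
    Pi.apply_single (fun _ ↦ ((↑) : ℝ → ℂ)) (fun _ ↦ Complex.ofReal_zero)]

lemma coordDiff_apply_ofReal {F : (ι → ℂ) → ℂ} {f : (ι → ℝ) → ℝ}
    (h : ∀ x : ι → ℝ, F (fun i ↦ (x i : ℂ)) = f x) (j : ι) (x : ι → ℝ) :
    ∂[j] F (fun i ↦ (x i : ℂ)) = ∂[j] f x := by
  simp only [coordDiff, fwdDiff, Complex.ofReal_sub, ← h, ofReal_add_single, Complex.ofReal_one]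

lemma continuous_coordDiff {F : (ι → ℂ) → ℂ} (hF : Continuous F) (j : ι) :
    Continuous (∂[j] F) := by
  unfold coordDiff fwdDiff
  fun_prop

namespace IsStableExtension

variable {F : (ι → ℂ) → ℂ} {f : (ι → ℝ) → ℝ}

lemma im_mul_conj_coordDiff_pos (hF : IsStableExtension F f) {z : ι → ℂ}
    (hz : ∀ i, 0 < (z i).im) {j : ι} (hd : ∂[j] F z ≠ 0) :
    0 < (F z * starRingEnd ℂ (∂[j] F z)).im := by
  have him : 0 < (F z / ∂[j] F z).im := by
    by_contra! hneg
    refine hF.ne_zero (z + Pi.single j (-(F z / ∂[j] F z))) (fun i ↦ ?_) ?_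
    · rcases eq_or_ne i j with rfl | hij
      · simpa using hneg.trans_lt (hz i)
      · simpa [hij] using hz i
    · rw [hF.isMultiaffine]
      field_simp
      ring
  have hmul : F z * starRingEnd ℂ (∂[j] F z) =
      F z / ∂[j] F z * (Complex.normSq (∂[j] F z) : ℂ) := by
    rw [← Complex.mul_conj]
    field_simp
  rw [hmul, Complex.im_mul_ofReal]
  exact mul_pos him (Complex.normSq_pos.2 hd)

lemma im_mul_conj_coordDiff_nonneg (hF : IsStableExtension F f) {z : ι → ℂ}
    (hz : ∀ i, 0 < (z i).im) (j : ι) : 0 ≤ (F z * starRingEnd ℂ (∂[j] F z)).im := by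
  rcases eq_or_ne (∂[j] F z) 0 with hd | hd
  · simp [hd]
  · exact (hF.im_mul_conj_coordDiff_pos hz hd).le

lemma im_mul_conj_coordDiff_nonneg_of_im_nonneg (hF : IsStableExtension F f) {z : ι → ℂ}
    (hz : ∀ i, 0 ≤ (z i).im) (j : ι) : 0 ≤ (F z * starRingEnd ℂ (∂[j] F z)).im := by
  have hcont : Continuous fun z ↦ (F z * starRingEnd ℂ (∂[j] F z)).im :=
    Complex.continuous_im.comp <|
      hF.continuous.mul (Complex.continuous_conj.comp (continuous_coordDiff hF.continuous j))
  have hclosure : z ∈ closure (Set.univ.pi fun _ ↦ {w : ℂ | 0 < w.im}) := by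
    simpa [closure_pi_set, Complex.closure_setOfPred_lt_im] using hz
  refine closure_minimal (fun w hw ↦ ?_) (isClosed_le continuous_const hcont) hclosure
  exact hF.im_mul_conj_coordDiff_nonneg (fun i ↦ hw i trivial) j

lemma isStronglyRayleigh (hF : IsStableExtension F f) : IsStronglyRayleigh f where
  isMultiaffine x j c := by
    have h := hF.isMultiaffine (fun i ↦ (x i : ℂ)) j c
    rw [← ofReal_add_single, coordDiff_apply_ofReal hF.apply_ofReal, hF.apply_ofReal,
      hF.apply_ofReal] at h
    exact_mod_cast h
  mul_coordDiff_coordDiff_le x i j := by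
    have h := hF.im_mul_conj_coordDiff_nonneg_of_im_nonneg
      (z := (fun k ↦ (x k : ℂ)) + Pi.single i Complex.I)
      (fun k ↦ by rcases eq_or_ne k i with rfl | hki <;> simp [*]) j
    have him (p q r s : ℝ) :
        ((p + Complex.I * q) * starRingEnd ℂ (r + Complex.I * s)).im = q * r - p * s := by
      simp
      ring
    have hFj := coordDiff_apply_ofReal hF.apply_ofReal j
    rw [hF.isMultiaffine, hF.isMultiaffine.coordDiff, coordDiff_apply_ofReal hFj, hFj,
      coordDiff_apply_ofReal hF.apply_ofReal, hF.apply_ofReal, him] at h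
    linarith

protected lemma meanShift (hF : IsStableExtension F f) (z w : ι) :
    IsStableExtension (meanShift z w F) (meanShift z w f) where
  isMultiaffine := hF.isMultiaffine.meanShift z w
  continuous := (hF.continuous.sub (continuous_coordDiff hF.continuous z)).sub
    (continuous_coordDiff hF.continuous w)
  apply_ofReal x := by
    simp only [meanShift, Pi.sub_apply, hF.apply_ofReal, coordDiff_apply_ofReal hF.apply_ofReal,
      Complex.ofReal_sub]
  ne_zero y hy h0 := by
    have hFy : F y = ∂[z] F y + ∂[w] F y := by
      simp only [meanShift, Pi.sub_apply] at h0
      linear_combination h0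
    have hsum : (F y * starRingEnd ℂ (∂[z] F y)).im + (F y * starRingEnd ℂ (∂[w] F y)).im = 0 := by
      rw [← Complex.add_im, ← mul_add, ← map_add, ← hFy, Complex.mul_conj, Complex.ofReal_im]
    have hz := hF.im_mul_conj_coordDiff_nonneg hy z
    have hw := hF.im_mul_conj_coordDiff_nonneg hy w
    have hz0 : ∂[z] F y = 0 := by
      by_contra hd
      linarith [hF.im_mul_conj_coordDiff_pos hy hd]
    have hw0 : ∂[w] F y = 0 := by
      by_contra hd
      linarith [hF.im_mul_conj_coordDiff_pos hy hd]
    exact hF.ne_zero y hy (by rw [hFy, hz0, hw0, add_zero])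

protected lemma tensor {G : (κ → ℂ) → ℂ} {g : (κ → ℝ) → ℝ} (hF : IsStableExtension F f)
    (hG : IsStableExtension G g) : IsStableExtension (tensor F G) (tensor f g) where
  isMultiaffine := hF.isMultiaffine.tensor hG.isMultiaffine
  continuous := (hF.continuous.comp (by fun_prop)).mul (hG.continuous.comp (by fun_prop))
  apply_ofReal x := by
    simp only [tensor, Complex.ofReal_mul, ← hF.apply_ofReal, ← hG.apply_ofReal]
    rfl
  ne_zero z hz := mul_ne_zero (hF.ne_zero _ fun i ↦ hz (Sum.inl i))
    (hG.ne_zero _ fun k ↦ hz (Sum.inr k))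

end IsStableExtension

end RealStable

section Selection

/-- The composition of the operators `1 - ∂_{z i} - ∂_{w i}` over the entries `i` of a list. -/
def iterMeanShift {R α ι : Type*} [CommRing R] [DecidableEq ι] (z w : α → ι) (l : List α)
    (f : (ι → R) → R) : (ι → R) → R :=
  l.foldr (fun i ↦ meanShift (z i) (w i)) f

variable {α ι : Type*} [DecidableEq ι] {F : (ι → ℂ) → ℂ} {f : (ι → ℝ) → ℝ}

protected lemma IsStableExtension.iterMeanShift (hF : IsStableExtension F f) (z w : α → ι)
    (l : List α) : IsStableExtension (iterMeanShift z w l F) (iterMeanShift z w l f) := by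
  induction l with
  | nil => exact hF
  | cons i l ih => exact ih.meanShift (z i) (w i)

lemma iterMeanShift_barrier [Finite ι] (hF : IsStableExtension F f) {b : ι → ℝ} {δ φ : ℝ}
    (hb : AboveRoots f b) (hbφ : ∀ k, ∂[k] f b ≤ φ * f b) (hδ : 0 ≤ δ) (hδφ : 1 ≤ δ * (1 - 2 * φ))
    (z w : α → ι) (l : List α) :
    AboveRoots (iterMeanShift z w l f)
        (b + (l.map fun i ↦ Pi.single (z i) δ + Pi.single (w i) δ).sum) ∧
      ∀ k, ∂[k] (iterMeanShift z w l f)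
          (b + (l.map fun i ↦ Pi.single (z i) δ + Pi.single (w i) δ).sum) ≤
        φ * iterMeanShift z w l f
          (b + (l.map fun i ↦ Pi.single (z i) δ + Pi.single (w i) δ).sum) := by
  induction l with
  | nil => simpa [iterMeanShift] using ⟨hb, hbφ⟩
  | cons i l ih =>
    obtain ⟨habove, hbound⟩ := ih
    have hRayleigh := (hF.iterMeanShift z w l).isStronglyRayleigh
    rw [List.map_cons, List.sum_cons, add_comm _ (List.sum _), ← add_assoc, ← add_assoc]
    exact ⟨(hRayleigh.aboveRoots_meanShift habove (hbound _) (hbound _) hδ hδφ).mono <|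
        (le_add_single _ _ hδ).trans (le_add_single _ _ hδ),
      fun k ↦ hRayleigh.coordDiff_meanShift_le habove (hbound _) (hbound _) hδ hδφ (hbound k)⟩

lemma exists_aboveRoots_sub_of_iterMeanShift [Finite ι] [DecidableEq α]
    (hF : IsStableExtension F f) {z w : α → ι} (hc : ∀ l, ∃ c, AboveRoots (iterMeanShift z w l f) c)
    {t : ℝ} (ht0 : 0 < t) (ht1 : t < 1) {l : List α} (hl : l.Nodup) {a : ι → ℝ}
    (ha : AboveRoots (iterMeanShift z w l f) a) :
    ∃ S : Finset α, AboveRoots f (a - (l.map fun i ↦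
      if i ∈ S then Pi.single (z i) (1 / t) else Pi.single (w i) (1 / (1 - t))).sum) := by
  induction l generalizing a with
  | nil => exact ⟨∅, by simpa [iterMeanShift] using ha⟩
  | cons i l ih =>
    obtain ⟨hil, hl⟩ := List.nodup_cons.1 hl
    have hne : ∀ k ∈ l, k ≠ i := fun k hk hki ↦ hil (hki ▸ hk)
    obtain ⟨c, hc⟩ := hc l
    rcases (hF.iterMeanShift z w l).isStronglyRayleigh.aboveRoots_sub_single_or ha hc ht0 ht1 with
      h | h <;> obtain ⟨S, hS⟩ := ih hl h
    · refine ⟨insert i S, ?_⟩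
      rw [List.map_cons, List.sum_cons, if_pos (Finset.mem_insert_self i S), ← sub_sub]
      convert hS using 3
      exact List.map_congr_left fun k hk ↦ by simp only [Finset.mem_insert, hne k hk, false_or]
    · refine ⟨S.erase i, ?_⟩
      rw [List.map_cons, List.sum_cons, if_neg (Finset.notMem_erase i S), ← sub_sub]
      convert hS using 3
      exact List.map_congr_left fun k hk ↦ by
        simp only [Finset.mem_erase, ne_eq, hne k hk, not_false_eq_true, true_and]

theorem exists_finset_aboveRoots [Finite ι] {G : (ι → ℂ) → ℂ} {g : (ι → ℝ) → ℝ}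
    (hF : IsStableExtension F f) (hG : IsStableExtension G g) {b c : ι → ℝ} {δ φ t : ℝ}
    (hb : AboveRoots f b) (hc : AboveRoots g c) (hbφ : ∀ i, ∂[i] f b ≤ φ * f b)
    (hcφ : ∀ i, ∂[i] g c ≤ φ * g c) (hδ : 0 ≤ δ) (hδφ : 1 ≤ δ * (1 - 2 * φ))
    (ht0 : 0 < t) (ht1 : t < 1) :
    ∃ S : Finset ι,
      AboveRoots f (fun i ↦ b i + δ - if i ∈ S then 1 / t else 0) ∧
      AboveRoots g (fun i ↦ c i + δ - if i ∈ S then 0 else 1 / (1 - t)) := by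
  cases nonempty_fintype ι
  have hFG := hF.tensor hG
  have hbc := hb.tensor hc
  have hφ (k : ι ⊕ ι) : ∂[k] (tensor f g) (Sum.elim b c) ≤ φ * tensor f g (Sum.elim b c) := by
    rcases k with i | i
    · rw [coordDiff_inl_tensor, tensor_elim, tensor_elim]
      linarith [mul_le_mul_of_nonneg_right (hbφ i) (hc c le_rfl).le]
    · rw [coordDiff_inr_tensor, tensor_elim, tensor_elim]
      linarith [mul_le_mul_of_nonneg_left (hcφ i) (hb b le_rfl).le]
  have hbarrier (l : List ι) :=
    (iterMeanShift_barrier hFG hbc hφ hδ hδφ Sum.inl Sum.inr l).1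
  obtain ⟨S, hS⟩ := exists_aboveRoots_sub_of_iterMeanShift hFG (fun l ↦ ⟨_, hbarrier l⟩) ht0 ht1
    (Finset.nodup_toList Finset.univ) (hbarrier Finset.univ.toList)
  rw [Finset.sum_map_toList, Finset.sum_map_toList] at hS
  have hshift : ∑ i, (Pi.single (Sum.inl i) δ + Pi.single (Sum.inr i) δ) =
      fun _ : ι ⊕ ι ↦ δ := by
    ext (i | i) <;> simp [Finset.sum_apply, Pi.single_apply]
  have hselected : ∑ i, (if i ∈ S then Pi.single (Sum.inl i) (1 / t) else
        Pi.single (Sum.inr i) (1 / (1 - t))) =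
      Sum.elim (fun i ↦ if i ∈ S then 1 / t else 0) (fun i ↦ if i ∈ S then 0 else 1 / (1 - t)) := by
    ext (i | i) <;> rw [Finset.sum_apply, Finset.sum_eq_single i] <;>
      simp +contextual [ite_apply, eq_comm]
  rw [hshift, hselected] at hS
  replace hS : AboveRoots (tensor f g) (Sum.elim (fun i ↦ b i + δ - if i ∈ S then 1 / t else 0)
      (fun i ↦ c i + δ - if i ∈ S then 0 else 1 / (1 - t))) := by
    convert hS using 1
    ext (i | i) <;> rfl
  exact ⟨S, hS.of_tensor_left hc, hS.of_tensor_right hb⟩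

end Selection

section CStarAlgebra

variable {A : Type*} [CStarAlgebra A] [PartialOrder A] [StarOrderedRing A]

lemma norm_le_of_le_algebraMap_of_neg_le_algebraMap {a : A} (ha : IsSelfAdjoint a) {r : ℝ}
    (hr : 0 ≤ r) (hle : a ≤ algebraMap ℝ A r) (hneg : -a ≤ algebraMap ℝ A r) : ‖a‖ ≤ r := by
  cases subsingleton_or_nontrivial A
  · rwa [Subsingleton.elim a 0, norm_zero]
  rcases CStarAlgebra.norm_or_neg_norm_mem_spectrum (a := a) with h | h
  · exact (le_algebraMap_iff_spectrum_le (a := a)).1 hle _ h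
  · refine (le_algebraMap_iff_spectrum_le (a := -a)).1 hneg _ ?_
    rwa [← spectrum.neg_eq, Set.mem_neg]

lemma exists_pos_algebraMap_le_of_isUnit {a : A} (ha : 0 ≤ a) (hunit : IsUnit a) :
    ∃ c > 0, algebraMap ℝ A c ≤ a := by
  cases subsingleton_or_nontrivial A
  · exact ⟨1, one_pos, (Subsingleton.elim _ _).le⟩
  · exact (CFC.exists_pos_algebraMap_le_iff (a := a)).2 fun _ hx ↦
      (hunit.isStrictlyPositive ha).spectrum_pos hx

lemma nonneg_of_isUnit_of_nonneg {X : Type*} [TopologicalSpace X] [PreconnectedSpace X] {f : X → A}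
    (hf : Continuous f) (hsa : ∀ x, IsSelfAdjoint (f x)) (hunit : ∀ x, IsUnit (f x)) {x₀ : X}
    (hx₀ : 0 ≤ f x₀) (x : X) : 0 ≤ f x := by
  have hclosed : IsClosed {x | 0 ≤ f x} := CStarAlgebra.isClosed_nonneg.preimage hf
  have hopen : IsOpen {x | 0 ≤ f x} := by
    refine isOpen_iff_mem_nhds.2 fun y hy ↦ ?_
    obtain ⟨c, hc, hcy⟩ := exists_pos_algebraMap_le_of_isUnit hy (hunit y)
    filter_upwards [hf.continuousAt.eventually (Metric.ball_mem_nhds (f y) hc)] with z hz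
    have hnorm : ‖f z - f y‖ ≤ c := (mem_ball_iff_norm.1 hz).le
    calc 0 ≤ algebraMap ℝ A c - algebraMap ℝ A ‖f z - f y‖ :=
          sub_nonneg.2 (algebraMap_mono A hnorm)
      _ ≤ f y + (f z - f y) := by
          rw [sub_eq_add_neg]
          exact add_le_add hcy ((hsa z).sub (hsa y)).neg_algebraMap_norm_le_self
      _ = f z := add_sub_cancel ..
  exact Set.eq_univ_iff_forall.1 (IsClopen.eq_univ ⟨hclosed, hopen⟩ ⟨x₀, hx₀⟩) x

end CStarAlgebra

section MatrixPencil

open scoped MatrixOrder Matrix.Norms.L2Operator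
open Matrix

variable {n ι : Type*} [Fintype ι]

/-- The affine pencil `P + ∑ i, z i • X i` of matrices. -/
def matrixPencil {R : Type*} [CommRing R] (P : Matrix n n R) (X : ι → Matrix n n R) (z : ι → R) :
    Matrix n n R :=
  P + ∑ i, z i • X i

lemma matrixPencil_add_single {R : Type*} [CommRing R] [DecidableEq ι] (P : Matrix n n R)
    (X : ι → Matrix n n R) (z : ι → R) (j : ι) (c : R) :
    matrixPencil P X (z + Pi.single j c) = matrixPencil P X z + c • X j := by
  simp [matrixPencil, add_smul, Finset.sum_add_distrib, Pi.single_apply, ite_smul, add_assoc]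

variable {P : Matrix n n ℂ} {X : ι → Matrix n n ℂ}

lemma matrixPencil_const_sub_ite [DecidableEq ι] (P : Matrix n n ℂ) (X : ι → Matrix n n ℂ)
    (S : Finset ι) (δ c : ℝ) :
    matrixPencil P X (fun i ↦ ((δ - if i ∈ S then c else 0 : ℝ) : ℂ)) =
      P + δ • ∑ i, X i - c • ∑ i ∈ S, X i := by
  simp only [matrixPencil, Complex.coe_smul, sub_smul, ite_smul, zero_smul, Finset.sum_sub_distrib,
    Finset.smul_sum, Finset.sum_ite_mem, Finset.univ_inter, add_sub_assoc]

lemma continuous_matrixPencil (P : Matrix n n ℂ) (X : ι → Matrix n n ℂ) :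
    Continuous (matrixPencil P X) := by
  unfold matrixPencil
  fun_prop

lemma isHermitian_matrixPencil (hP : P.IsHermitian) (hX : ∀ i, (X i).IsHermitian) (x : ι → ℝ) :
    (matrixPencil P X fun i ↦ (x i : ℂ)).IsHermitian := by
  simp [IsHermitian, matrixPencil, hP.eq, (hX _).eq, conjTranspose_sum]

lemma posDef_matrixPencil (hP : P.PosDef) (hX : ∀ i, (X i).PosSemidef) {x : ι → ℝ} (hx : 0 ≤ x) :
    (matrixPencil P X fun i ↦ (x i : ℂ)).PosDef :=
  hP.add_posSemidef <| posSemidef_sum _ fun i _ ↦ (hX i).smul (Complex.zero_le_real.2 (hx i))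

variable [Fintype n]

lemma dotProduct_matrixPencil_mulVec (P : Matrix n n ℂ) (X : ι → Matrix n n ℂ) (z : ι → ℂ)
    (v w : n → ℂ) :
    v ⬝ᵥ matrixPencil P X z *ᵥ w = v ⬝ᵥ P *ᵥ w + ∑ i, z i * (v ⬝ᵥ X i *ᵥ w) := by
  simp only [matrixPencil, add_mulVec, sum_mulVec, smul_mulVec, dotProduct_add, dotProduct_sum,
    dotProduct_smul, smul_eq_mul]

variable [DecidableEq n]

-- In a bordered matrix the scalar `c` enters only the last column, in which `det` is linear.
lemma det_add_smul_vecMulVec {R : Type*} [CommRing R] (A : Matrix n n R) (u v : n → R) (c : R) :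
    (A + c • vecMulVec u v).det = A.det + c * ((A + vecMulVec u v).det - A.det) := by
  set M : Matrix (n ⊕ Unit) (n ⊕ Unit) R := fromBlocks A 0 (replicateRow Unit v) 1 with hM
  set e : n ⊕ Unit → R := Sum.elim 0 1 with he
  set w : n ⊕ Unit → R := Sum.elim (-u) 0 with hw
  have hdet (c : R) :
      (A + c • vecMulVec u v).det = (M.updateCol (Sum.inr ()) (e + c • w)).det := by
    have hblocks : M.updateCol (Sum.inr ()) (e + c • w) =
        fromBlocks A (replicateCol Unit (-(c • u))) (replicateRow Unit v) 1 := by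
      ext (i | i) (j | j) <;> simp [hM, he, hw]
    rw [hblocks, det_fromBlocks_one₂₂]
    congr 1
    ext i j
    simp [mul_apply, vecMulVec_apply, mul_assoc]
  have hzero := hdet 0
  have hone := hdet 1
  simp only [zero_smul, one_smul, add_zero, det_updateCol_add] at hzero hone
  rw [hdet, det_updateCol_add, det_updateCol_smul, hone, hzero]
  ring

lemma isMultiaffine_det_matrixPencil {R : Type*} [CommRing R] [DecidableEq ι] (P : Matrix n n R)
    (u v : ι → n → R) :
    IsMultiaffine fun z ↦ (matrixPencil P (fun i ↦ vecMulVec (u i) (v i)) z).det := fun z j c ↦ by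
  simp only [coordDiff, fwdDiff, matrixPencil_add_single, one_smul]
  exact det_add_smul_vecMulVec ..

lemma det_matrixPencil_ne_zero (hP : P.PosDef) (hX : ∀ i, (X i).PosSemidef) {z : ι → ℂ}
    (hz : ∀ i, 0 < (z i).im) : (matrixPencil P X z).det ≠ 0 := by
  intro hdet
  obtain ⟨v, hv, hker⟩ := exists_mulVec_eq_zero_iff.2 hdet
  have hPv := Complex.pos_iff.1 (hP.dotProduct_mulVec_pos hv)
  have hXv (i : ι) := Complex.nonneg_iff.1 ((hX i).dotProduct_mulVec_nonneg v)
  have hform : star v ⬝ᵥ P *ᵥ v + ∑ i, z i * (star v ⬝ᵥ X i *ᵥ v) = 0 := by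
    rw [← dotProduct_matrixPencil_mulVec, hker, dotProduct_zero]
  have him : ∑ i, (z i).im * (star v ⬝ᵥ X i *ᵥ v).re = 0 := by
    simpa [← hPv.2, ← (hXv _).2] using congrArg Complex.im hform
  have hre (i : ι) : (star v ⬝ᵥ X i *ᵥ v).re = 0 :=
    (mul_eq_zero.1 ((Finset.sum_eq_zero_iff_of_nonneg fun i _ ↦
      mul_nonneg (hz i).le (hXv i).1).1 him i (Finset.mem_univ i))).resolve_left (hz i).ne'
  have hPv_zero : (star v ⬝ᵥ P *ᵥ v).re = 0 := by
    simpa [hre, ← (hXv _).2] using congrArg Complex.re hform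
  exact hPv.1.ne' hPv_zero

/-- The determinant of `P + ∑ i, x i • X i` for real `x`, which is a real number when `P` and the
`X i` are Hermitian; taking the real part makes it one by definition. -/
noncomputable def realDetPencil (P : Matrix n n ℂ) (X : ι → Matrix n n ℂ) (x : ι → ℝ) : ℝ :=
  (matrixPencil P X fun i ↦ (x i : ℂ)).det.re

lemma aboveRoots_realDetPencil (hP : P.PosDef) (hX : ∀ i, (X i).PosSemidef) :
    AboveRoots (realDetPencil P X) 0 := fun _ hx ↦
  (Complex.pos_iff.1 (posDef_matrixPencil hP hX hx).det_pos).1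

lemma nonneg_matrixPencil_of_aboveRoots (hP : P.PosDef) (hX : ∀ i, (X i).PosSemidef) {a : ι → ℝ}
    (ha : AboveRoots (realDetPencil P X) a) : 0 ≤ matrixPencil P X fun i ↦ (a i : ℂ) := by
  have : PreconnectedSpace (Set.Ici a) :=
    Subtype.preconnectedSpace (convex_Ici a).isPreconnected
  refine nonneg_of_isUnit_of_nonneg
    (f := fun x : Set.Ici a ↦ matrixPencil P X fun i ↦ (x.1 i : ℂ))
    ((continuous_matrixPencil P X).comp (continuous_pi fun i ↦
      Complex.continuous_ofReal.comp ((continuous_apply i).comp continuous_subtype_val)))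
    (fun x ↦ isHermitian_matrixPencil hP.isHermitian (fun i ↦ (hX i).isHermitian) x.1)
    (fun x ↦ (isUnit_iff_isUnit_det _).2 (isUnit_iff_ne_zero.2 fun h0 ↦ ?_))
    (x₀ := ⟨a ⊔ 0, Set.mem_Ici.2 le_sup_left⟩) ?_ ⟨a, Set.self_mem_Ici⟩
  · exact (ha x.1 x.2).ne' (by rw [realDetPencil, h0, Complex.zero_re])
  · exact (posDef_matrixPencil hP hX le_sup_right).posSemidef.nonneg

variable [DecidableEq ι]

lemma isStableExtension_det_matrixPencil (hP : P.PosDef) (u : ι → n → ℂ) :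
    IsStableExtension (fun z ↦ (matrixPencil P (fun i ↦ vecMulVec (u i) (star (u i))) z).det)
      (realDetPencil P fun i ↦ vecMulVec (u i) (star (u i))) where
  isMultiaffine := isMultiaffine_det_matrixPencil P u _
  continuous := (continuous_matrixPencil P _).matrix_det
  apply_ofReal x := by
    have hherm := isHermitian_matrixPencil hP.isHermitian
      (fun i ↦ (posSemidef_vecMulVec_self_star (u i)).isHermitian) x
    refine (Complex.conj_eq_iff_re.1 ?_).symm
    rw [starRingEnd_apply, ← det_conjTranspose, hherm.eq]
  ne_zero _ hz := det_matrixPencil_ne_zero hP (fun i ↦ posSemidef_vecMulVec_self_star (u i)) hz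

lemma det_add_vecMulVec (hP : IsUnit P.det) (u v : n → ℂ) :
    (P + vecMulVec u v).det = P.det * (1 + v ⬝ᵥ P⁻¹ *ᵥ u) := by
  rw [vecMulVec_eq Unit, det_add_replicateCol_mul_replicateRow hP, det_unique (n := Unit),
    Matrix.mul_assoc,
    ← replicateCol_mulVec, Matrix.add_apply, one_apply_eq, replicateRow_mul_replicateCol_apply]

lemma coordDiff_realDetPencil_zero_le (hP : P.PosDef) (u : ι → n → ℂ) {j : ι} {φ : ℝ}
    (hφ : (star (u j) ⬝ᵥ P⁻¹ *ᵥ u j).re ≤ φ) :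
    ∂[j] (realDetPencil P fun i ↦ vecMulVec (u i) (star (u i))) 0 ≤
      φ * realDetPencil P (fun i ↦ vecMulVec (u i) (star (u i))) 0 := by
  have hdet := Complex.pos_iff.1 hP.det_pos
  have hzero : matrixPencil P (fun i ↦ vecMulVec (u i) (star (u i))) (fun _ ↦ 0) = P := by
    simp [matrixPencil]
  simp only [coordDiff, fwdDiff, realDetPencil, ofReal_add_single, matrixPencil_add_single,
    Pi.zero_apply, Complex.ofReal_zero, hzero, Complex.ofReal_one, one_smul,
    det_add_vecMulVec hP.det_pos.ne'.isUnit, Complex.mul_re, ← hdet.2, zero_mul, sub_zero,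
    Complex.add_re, Complex.one_re]
  linarith [mul_le_mul_of_nonneg_left hφ hdet.1.le]

theorem exists_finset_sum_le (hP : P.PosDef) (u : ι → n → ℂ) {δ φ t : ℝ}
    (hφ : ∀ i, (star (u i) ⬝ᵥ P⁻¹ *ᵥ u i).re ≤ φ) (hδ : 0 ≤ δ) (hδφ : 1 ≤ δ * (1 - 2 * φ))
    (ht0 : 0 < t) (ht1 : t < 1) :
    ∃ S : Finset ι,
      ∑ i ∈ S, vecMulVec (u i) (star (u i)) ≤
        t • (P + δ • ∑ i, vecMulVec (u i) (star (u i))) ∧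
      ∑ i ∈ Sᶜ, vecMulVec (u i) (star (u i)) ≤
        (1 - t) • (P + δ • ∑ i, vecMulVec (u i) (star (u i))) := by
  have hX (i : ι) := posSemidef_vecMulVec_self_star (u i)
  have hstable := isStableExtension_det_matrixPencil hP u
  have habove := aboveRoots_realDetPencil hP hX
  have hbarrier (i : ι) := coordDiff_realDetPencil_zero_le hP u (hφ i)
  obtain ⟨S, hS, hSc⟩ := exists_finset_aboveRoots hstable hstable habove habove hbarrier hbarrier
    hδ hδφ ht0 ht1
  replace hS := nonneg_matrixPencil_of_aboveRoots hP hX hS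
  replace hSc := nonneg_matrixPencil_of_aboveRoots hP hX hSc
  have hcompl (i : ι) : (if i ∈ S then 0 else (1 - t)⁻¹) = if i ∈ Sᶜ then (1 - t)⁻¹ else 0 := by
    simp only [Finset.mem_compl, ite_not]
  simp only [Pi.zero_apply, zero_add, hcompl, matrixPencil_const_sub_ite, sub_nonneg, one_div,
    inv_smul_le_iff_of_pos ht0, inv_smul_le_iff_of_pos (sub_pos.2 ht1)] at hS hSc
  exact ⟨S, hS, hSc⟩

end MatrixPencil

section Discrepancy

variable {A : Type*} [CStarAlgebra A] [PartialOrder A] [StarOrderedRing A] {a b : A} {t : ℝ}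

lemma sub_smul_le_algebraMap (hb : b ≤ 1) {s δ : ℝ} (hs : 0 ≤ s) (hδ : 1 ≤ δ) (ht0 : 0 ≤ t)
    (ht1 : t ≤ 1) (hab : a ≤ t • (s • 1 + δ • b)) : a - t • b ≤ algebraMap ℝ A (s + δ - 1) := by
  have hsδ : t * (s + δ - 1) ≤ s + δ - 1 := mul_le_of_le_one_left (by linarith) ht1
  calc a - t • b ≤ t • (s • 1 + δ • b) - t • b := sub_le_sub_right hab _
    _ = (t * s) • 1 + (t * (δ - 1)) • b := by module
    _ ≤ (t * s) • 1 + (t * (δ - 1)) • 1 := by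
        have := sub_nonneg.2 hδ
        gcongr
    _ = algebraMap ℝ A (t * (s + δ - 1)) := by
        rw [← add_smul, ← mul_add, Algebra.algebraMap_eq_smul_one, add_sub_assoc]
    _ ≤ algebraMap ℝ A (s + δ - 1) := algebraMap_mono A hsδ

lemma norm_sub_smul_le (ha : IsSelfAdjoint a) (hb : IsSelfAdjoint b) (hb1 : b ≤ 1) {s δ : ℝ}
    (hs : 0 ≤ s) (hδ : 1 ≤ δ) (ht0 : 0 ≤ t) (ht1 : t ≤ 1) (hab : a ≤ t • (s • 1 + δ • b))
    (hba : b - a ≤ (1 - t) • (s • 1 + δ • b)) : ‖a - t • b‖ ≤ s + δ - 1 := by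
  refine norm_le_of_le_algebraMap_of_neg_le_algebraMap
    (ha.sub ((IsSelfAdjoint.all t).smul hb)) (by linarith)
    (sub_smul_le_algebraMap hb1 hs hδ ht0 ht1 hab) ?_
  calc -(a - t • b) = b - a - (1 - t) • b := by module
    _ ≤ algebraMap ℝ A (s + δ - 1) :=
      sub_smul_le_algebraMap hb1 hs hδ (sub_nonneg.2 ht1) (sub_le_self 1 ht0) hba

lemma norm_sub_smul_le_one (ha : 0 ≤ a) (hab : a ≤ b) (hb : b ≤ 1) (ht0 : 0 ≤ t) (ht1 : t ≤ 1) :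
    ‖a - t • b‖ ≤ 1 := by
  have hb0 : 0 ≤ b := ha.trans hab
  refine norm_le_of_le_algebraMap_of_neg_le_algebraMap
    ((IsSelfAdjoint.of_nonneg ha).sub ((IsSelfAdjoint.all t).smul (.of_nonneg hb0)))
    zero_le_one ?_ ?_ <;> rw [map_one]
  · exact (sub_le_self a (smul_nonneg ht0 hb0)).trans (hab.trans hb)
  · calc -(a - t • b) = t • b - a := neg_sub ..
      _ ≤ t • b := sub_le_self _ ha
      _ ≤ b := smul_le_of_le_one_left hb0 ht1
      _ ≤ 1 := hb

end Discrepancy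

section Main

open scoped MatrixOrder Matrix.Norms.L2Operator
open Matrix

variable {n ι : Type*} [Fintype n] [DecidableEq n] [Fintype ι] {ε t : ℝ}
  {u : ι → EuclideanSpace ℂ n}

lemma re_star_dotProduct_inv_smul_one_mulVec {s : ℝ} (hs : 0 < s) (v : EuclideanSpace ℂ n) :
    (star (v : n → ℂ) ⬝ᵥ (s • (1 : Matrix n n ℂ))⁻¹ *ᵥ v).re = s⁻¹ * ‖v‖ ^ 2 := by
  have hinv : (s • (1 : Matrix n n ℂ))⁻¹ = s⁻¹ • 1 :=
    inv_eq_right_inv (by simp [smul_smul, hs.ne'])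
  rw [hinv, smul_mulVec, one_mulVec, dotProduct_smul, Complex.smul_re, smul_eq_mul,
    dotProduct_comm, ← EuclideanSpace.inner_eq_star_dotProduct, ← RCLike.re_eq_complex_re,
    inner_self_eq_norm_sq]

lemma exists_norm_sum_sub_smul_le_of_pos (hB : ∑ i, vecMulVec (u i) (star (u i)) ≤ 1) (hε : 0 < ε)
    (hε4 : 4 * √ε ≤ 1) (hu : ∀ i, ‖u i‖ ^ 2 ≤ ε) (ht0 : 0 < t) (ht1 : t < 1) :
    ∃ S : Finset ι, ‖∑ i ∈ S, vecMulVec (u i) (star (u i)) -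
      t • ∑ i, vecMulVec (u i) (star (u i))‖ ≤ 4 * √ε := by
  classical
  set r := √ε
  have hr0 : 0 < r := Real.sqrt_pos.2 hε
  have hr1 : 0 < 1 - r := by linarith
  have hφ (i : ι) : (star (u i : n → ℂ) ⬝ᵥ ((2 * r) • (1 : Matrix n n ℂ))⁻¹ *ᵥ u i).re ≤ r / 2 := by
    rw [re_star_dotProduct_inv_smul_one_mulVec (by positivity), inv_mul_le_iff₀ (by positivity)]
    linarith [hu i, Real.sq_sqrt hε.le]
  have hδφ : 1 ≤ (1 - r)⁻¹ * (1 - 2 * (r / 2)) := by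
    rw [mul_div_cancel₀ r two_ne_zero, inv_mul_cancel₀ hr1.ne']
  obtain ⟨S, hS, hSc⟩ := exists_finset_sum_le (PosDef.one.smul (by positivity : 0 < 2 * r))
    (fun i ↦ (u i : n → ℂ)) hφ (inv_nonneg.2 hr1.le) hδφ ht0 ht1
  rw [eq_sub_of_add_eq (Finset.sum_compl_add_sum S fun i ↦ vecMulVec (u i) (star (u i)))] at hSc
  have hsa (T : Finset ι) : IsSelfAdjoint (∑ i ∈ T, vecMulVec (u i) (star (u i))) :=
    (posSemidef_sum T fun i _ ↦ posSemidef_vecMulVec_self_star (u i)).isHermitian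
  refine ⟨S, (norm_sub_smul_le (hsa S) (hsa _) hB (by positivity)
    ((one_le_inv₀ hr1).2 (by linarith)) ht0.le ht1.le hS hSc).trans ?_⟩
  have hinv : (1 - r)⁻¹ ≤ 1 + 2 * r := by
    rw [inv_le_iff_one_le_mul₀ hr1]
    nlinarith
  linarith

theorem stmt4_general (u : ι → EuclideanSpace ℂ n) (hB : ∑ i, vecMulVec (u i) (star (u i)) ≤ 1)
    (hu : ∀ i, ‖u i‖ ^ 2 ≤ ε) (ht0 : 0 ≤ t) (ht1 : t ≤ 1) :
    ∃ S : Finset ι, ‖∑ i ∈ S, vecMulVec (u i) (star (u i)) -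
      t • ∑ i, vecMulVec (u i) (star (u i))‖ ≤ min 1 (4 * √ε) := by
  have hX (i : ι) : 0 ≤ vecMulVec (u i) (star (u i)) :=
    (posSemidef_vecMulVec_self_star (u i)).nonneg
  have hle_one (S : Finset ι) : ‖∑ i ∈ S, vecMulVec (u i) (star (u i)) -
      t • ∑ i, vecMulVec (u i) (star (u i))‖ ≤ 1 :=
    norm_sub_smul_le_one (Finset.sum_nonneg fun i _ ↦ hX i)
      (Finset.sum_le_univ_sum_of_nonneg hX) hB ht0 ht1
  suffices ∃ S : Finset ι, ‖∑ i ∈ S, vecMulVec (u i) (star (u i)) -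
      t • ∑ i, vecMulVec (u i) (star (u i))‖ ≤ 4 * √ε from
    this.imp fun S hS ↦ le_min (hle_one S) hS
  rcases le_or_gt ε 0 with hε | hε
  · have hzero (i : ι) : u i = 0 :=
      norm_eq_zero.1 (pow_eq_zero_iff two_ne_zero |>.1 <|
        le_antisymm ((hu i).trans hε) (sq_nonneg _))
    exact ⟨∅, by simp [hzero]⟩
  rcases lt_or_ge 1 (4 * √ε) with hε4 | hε4
  · exact ⟨∅, (hle_one ∅).trans hε4.le⟩
  rcases ht0.eq_or_lt with rfl | ht0
  · exact ⟨∅, by simp⟩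
  rcases ht1.eq_or_lt with rfl | ht1
  · exact ⟨Finset.univ, by simp⟩
  exact exists_norm_sum_sub_smul_le_of_pos hB hε hε4 hu ht0 ht1

end Main

lemma min_one_four_mul_sqrt_le (ε : ℝ) : min 1 (4 * √ε) ≤ 4 * ε ^ ((1 : ℝ) / 4) := by
  rcases lt_or_ge ε 0 with hneg | hnonneg
  · -- For `ε < 0` the real power is the junk value `exp (log |ε| / 4) * cos (π / 4)`.
    have hcos : 0 ≤ Real.cos (1 / 4 * Real.pi) :=
      Real.cos_nonneg_of_neg_pi_div_two_le_of_le (by linarith [Real.pi_pos])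
        (by linarith [Real.pi_pos])
    rw [Real.sqrt_eq_zero_of_nonpos hneg.le, mul_zero, Real.rpow_def_of_neg hneg]
    exact (min_le_right _ _).trans (by positivity)
  rcases le_total ε 1 with hle | hge
  · rw [Real.sqrt_eq_rpow]
    exact (min_le_right _ _).trans <| mul_le_mul_of_nonneg_left
      (Real.rpow_le_rpow_of_exponent_ge' hnonneg hle (by norm_num) (by norm_num)) (by norm_num)
  · exact (min_le_left _ _).trans
      (by linarith [Real.one_le_rpow hge (by norm_num : (0 : ℝ) ≤ 1 / 4)])

/-- There is a universal constant `C > 0` such that whenever `B = ∑ uᵢuᵢ* ≤ I`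
(i.e. `I - B` is positive semidefinite), `‖uᵢ‖² ≤ ε` for all `i`, and `t ∈ [0,1]`,
there is a set of indices `S` with `‖∑_{i ∈ S} uᵢuᵢ* − t B‖ ≤ C ε^(1/4)`. -/
theorem stmt4 :
    ∃ C : ℝ, 0 < C ∧
      ∀ (d m : ℕ) (ε : ℝ) (u : Fin m → EuclideanSpace ℂ (Fin d))
        (B : Matrix (Fin d) (Fin d) ℂ),
        B = ∑ i, outer (u i) →
        (1 - B).PosSemidef →
        (∀ i, ‖u i‖ ^ 2 ≤ ε) →
        ∀ t : ℝ, 0 ≤ t → t ≤ 1 →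
          ∃ S : Finset (Fin m),
            opNorm ((∑ i ∈ S, outer (u i)) - (t : ℂ) • B)
              ≤ C * ε ^ ((1 : ℝ) / 4) := by
  refine ⟨4, by norm_num, fun d m ε u B hB hB1 hu t ht0 ht1 ↦ ?_⟩
  subst hB
  obtain ⟨S, hS⟩ := stmt4_general u hB1 hu ht0 ht1
  exact ⟨S, hS.trans (min_one_four_mul_sqrt_le ε)⟩
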